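/- Let G be a group, k a commutative G-ring, n a natural number, and ε ∈ k invertible. Then there is an isomorphism of graded k-modules Tor_*^{GBR_n(ε)}(𝟙,𝟙) ≅ Tor_*^{k[G^n ⋊ B_n]}(k,k) = H_*(G^n ⋊ B_n; k), where the braid group B_n acts on G^n by permuting the factors (via the projection B_n → Σ_n). -/

import Mathlib

open scoped TensorProduct

noncomputable section

/-! ### Bar-complex homology of an augmented algebra

For a `k`-algebra `A` with augmentation `ε : A →ₐ[k] k` (the algebra map corresponding to
the trivial module `𝟙 = k`), we form the (unnormalized) bar complex `C_q = A^{⊗ q}`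
(tensors over `k`), with the usual differential
`d(a₁⊗…⊗a_q) = ε(a₁)(a₂⊗…) + Σ (-1)^i (…a_i a_{i+1}…) + (-1)^q ε(a_q)(a₁⊗…)`,
whose homology is `Tor_*^A(𝟙,𝟙)`. -/

/-- The modules `A^{⊗ q}` of the bar complex. -/
def barC (k : Type) [CommRing k] (A : Type) [Ring A] [Algebra k A] : ℕ → ModuleCat k
  | 0 => ModuleCat.of k k
  | (q + 1) => ModuleCat.of k (A ⊗[k] (barC k A q))

variable (k : Type) [CommRing k] (A : Type) [Ring A] [Algebra k A] (ε : A →ₐ[k] k)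

/-- Left multiplication of `A` on the leftmost bar factor (via `ε` in degree `0`). -/
def barAct : ∀ q : ℕ, A →ₗ[k] ((barC k A q : Type) →ₗ[k] (barC k A q : Type))
  | 0 => (LinearMap.lsmul k k).comp ε.toLinearMap
  | (q + 1) =>
    show A →ₗ[k] ((A ⊗[k] (barC k A q : Type)) →ₗ[k] (A ⊗[k] (barC k A q : Type))) from
    { toFun := fun a => TensorProduct.map (LinearMap.mulLeft k a) LinearMap.id
      map_add' := by
        intro a b
        refine TensorProduct.ext' fun x y => ?_
        simp [add_mul, TensorProduct.add_tmul]
      map_smul' := by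
        intro c a
        refine TensorProduct.ext' fun x y => ?_
        simp [TensorProduct.smul_tmul', smul_mul_assoc] }

/-- All terms of the bar differential except the first face. -/
def barB : ∀ q : ℕ, ((A ⊗[k] (barC k A q : Type)) →ₗ[k] (barC k A q : Type))
  | 0 => - TensorProduct.lift ((LinearMap.lsmul k (barC k A 0 : Type)).comp ε.toLinearMap)
  | (q + 1) =>
    show (A ⊗[k] (A ⊗[k] (barC k A q : Type))) →ₗ[k] (A ⊗[k] (barC k A q : Type)) from
    TensorProduct.lift (LinearMap.mk₂ k
      (fun (a : A) (x : A ⊗[k] (barC k A q : Type)) =>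
        -((show A →ₗ[k] ((A ⊗[k] (barC k A q : Type)) →ₗ[k] (A ⊗[k] (barC k A q : Type))) from
            barAct k A ε (q + 1)) a x) - a ⊗ₜ[k] (barB q x))
      (by intro a b x
          suffices key : ∀ F : A →ₗ[k] ((A ⊗[k] (barC k A q : Type)) →ₗ[k] (A ⊗[k] (barC k A q : Type))),
              -(F (a + b) x) - (a + b) ⊗ₜ[k] (barB q x)
                = (-(F a x) - a ⊗ₜ[k] (barB q x)) + (-(F b x) - b ⊗ₜ[k] (barB q x)) from key _
          intro F
          simp only [map_add, LinearMap.add_apply, TensorProduct.add_tmul]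
          try abel)
      (by intro c a x
          suffices key : ∀ F : A →ₗ[k] ((A ⊗[k] (barC k A q : Type)) →ₗ[k] (A ⊗[k] (barC k A q : Type))),
              -(F (c • a) x) - (c • a) ⊗ₜ[k] (barB q x)
                = c • (-(F a x) - a ⊗ₜ[k] (barB q x)) from key _
          intro F
          simp only [map_smul, LinearMap.smul_apply, smul_sub, smul_neg,
            TensorProduct.smul_tmul'])
      (by intro a x y
          simp only [map_add, LinearMap.map_add, TensorProduct.tmul_add]
          try abel)
      (by intro c a x
          simp only [map_smul, LinearMap.map_smul, TensorProduct.tmul_smul, smul_sub, smul_neg]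
          try abel))

/-- The bar differential `C_{q+1} = A ⊗ C_q → C_q`. -/
def bard (q : ℕ) : (A ⊗[k] (barC k A q : Type)) →ₗ[k] (barC k A q : Type) :=
  TensorProduct.lift ((LinearMap.lsmul k (barC k A q : Type)).comp ε.toLinearMap)
  + barB k A ε q

/-- Cycles of the bar complex. -/
def barCycles : ∀ q : ℕ, Submodule k (barC k A q : Type)
  | 0 => ⊤
  | (q + 1) =>
    show Submodule k (barC k A (q + 1) : Type) from LinearMap.ker (bard k A ε q)

/-- `Tor_q^A(𝟙, 𝟙)`, the homology of the algebra `A` with augmentation (trivial module) `ε`,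
computed by the bar complex. -/
def barTor (q : ℕ) : Type :=
  (barCycles k A ε q) ⧸
    (Submodule.comap (barCycles k A ε q).subtype (LinearMap.range (bard k A ε q)))

instance (q : ℕ) : AddCommGroup (barTor k A ε q) :=
  inferInstanceAs (AddCommGroup ((barCycles k A ε q) ⧸
    (Submodule.comap (barCycles k A ε q).subtype (LinearMap.range (bard k A ε q)))))

instance (q : ℕ) : Module k (barTor k A ε q) :=
  inferInstanceAs (Module k ((barCycles k A ε q) ⧸
    (Submodule.comap (barCycles k A ε q).subtype (LinearMap.range (bard k A ε q)))))

/-- The augmentation of a group algebra `k[G]`, corresponding to the trivial action of `G`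
on `k`. -/
def groupAug (G : Type) [Group G] : MonoidAlgebra k G →ₐ[k] k :=
  MonoidAlgebra.lift k k G 1

/-- Group homology `H_*(G; k) = Tor_*^{k[G]}(k, k)` (with the trivial action on `k`). -/
abbrev groupTor (G : Type) [Group G] (q : ℕ) : Type :=
  barTor k (MonoidAlgebra k G) (groupAug k G) q

section Groups

/-- The action of the symmetric group on `G^n` by permuting the factors. -/
def permMulAut (G : Type) [Group G] (n : ℕ) :
    Equiv.Perm (Fin n) →* MulAut (Fin n → G) where
  toFun σ :=
    { toFun := fun f => f ∘ σ.symm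
      invFun := fun f => f ∘ σ
      left_inv := fun f => by funext i; simp
      right_inv := fun f => by funext i; simp
      map_mul' := fun f g => rfl }
  map_one' := by ext f i; rfl
  map_mul' := fun σ τ => by ext f i; rfl

/-- The Artin braid relations, on `m` generators (so for the braid group on `m+1` strands). -/
def braidRels (m : ℕ) : Set (FreeGroup (Fin m)) :=
  { x | ∃ i j : Fin m,
      ((i : ℕ) + 1 = (j : ℕ) ∧
        x = .of i * .of j * .of i * (.of j * .of i * .of j)⁻¹) ∨
      ((i : ℕ) + 1 < (j : ℕ) ∧
        x = .of i * .of j * (.of j * .of i)⁻¹) }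

/-- The braid group `B_n` on `n` strands, presented by the Artin generators
`σ_1, …, σ_{n-1}` and the braid relations. -/
abbrev BraidGroup (n : ℕ) : Type := PresentedGroup (braidRels (n - 1))

private lemma swap_braid {α : Type} [DecidableEq α] (a b c : α)
    (hab : a ≠ b) (hac : a ≠ c) (hbc : b ≠ c) :
    Equiv.swap a b * Equiv.swap b c * Equiv.swap a b
      = Equiv.swap b c * Equiv.swap a b * Equiv.swap b c := by
  have h1 : Equiv.swap b c * Equiv.swap a b * Equiv.swap b c = Equiv.swap c a :=
    Equiv.swap_mul_swap_mul_swap hab hac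
  have h2 : Equiv.swap b a * Equiv.swap c b * Equiv.swap b a = Equiv.swap a c :=
    Equiv.swap_mul_swap_mul_swap hbc.symm hac.symm
  rw [Equiv.swap_comm b a, Equiv.swap_comm c b] at h2
  rw [h1, h2, Equiv.swap_comm]

private lemma swap_swap_comm {α : Type} [DecidableEq α] (a b c d : α)
    (hac : a ≠ c) (had : a ≠ d) (hbc : b ≠ c) (hbd : b ≠ d) :
    Equiv.swap a b * Equiv.swap c d = Equiv.swap c d * Equiv.swap a b := by
  have h := Equiv.swap_apply_apply (Equiv.swap c d) a b
  rw [Equiv.swap_apply_of_ne_of_ne hac had, Equiv.swap_apply_of_ne_of_ne hbc hbd] at h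
  exact eq_mul_inv_iff_mul_eq.mp h

/-- The transpositions which are the images of the braid generators. -/
def braidGen (n : ℕ) (i : Fin (n - 1)) : Equiv.Perm (Fin n) :=
  Equiv.swap ⟨(i : ℕ), by have := i.2; omega⟩ ⟨(i : ℕ) + 1, by have := i.2; omega⟩

private lemma braidGen_braid (n : ℕ) (i j : Fin (n - 1)) (hij : (i : ℕ) + 1 = (j : ℕ)) :
    braidGen n i * braidGen n j * braidGen n i
      = braidGen n j * braidGen n i * braidGen n j := by
  obtain ⟨i, hi⟩ := i
  obtain ⟨j, hj⟩ := j
  simp only at hij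
  subst hij
  unfold braidGen
  exact swap_braid _ _ _ (by simp only [ne_eq, Fin.mk.injEq]; omega)
    (by simp only [ne_eq, Fin.mk.injEq]; omega) (by simp only [ne_eq, Fin.mk.injEq]; omega)

private lemma braidGen_comm (n : ℕ) (i j : Fin (n - 1)) (hij : (i : ℕ) + 1 < (j : ℕ)) :
    braidGen n i * braidGen n j = braidGen n j * braidGen n i := by
  unfold braidGen
  exact swap_swap_comm _ _ _ _ (by simp only [ne_eq, Fin.mk.injEq]; omega)
    (by simp only [ne_eq, Fin.mk.injEq]; omega) (by simp only [ne_eq, Fin.mk.injEq]; omega)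
    (by simp only [ne_eq, Fin.mk.injEq]; omega)

/-- The canonical projection from the braid group to the symmetric group. -/
def braidToPerm (n : ℕ) : BraidGroup n →* Equiv.Perm (Fin n) :=
  PresentedGroup.toGroup (f := braidGen n) (by
    rintro r ⟨i, j, (⟨hij, rfl⟩ | ⟨hij, rfl⟩)⟩ <;>
      simp only [map_mul, map_inv, FreeGroup.lift_apply_of] <;> rw [mul_inv_eq_one]
    · exact braidGen_braid n i j hij
    · exact braidGen_comm n i j hij)

end Groups

section GBRsection

/-! The `G`-equivariant braided rook algebra `GBR_n(ε)`: generators `b i`/`bi i`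
(over/under crossings), `p j` (deleted strand) and `t g j` (label `g : G` on strand `j`);
a contractible middle component contributes the factor `ε`. -/

inductive GBRGen (n : ℕ) (G : Type) : Type
  | b : Fin (n - 1) → GBRGen n G
  | bi : Fin (n - 1) → GBRGen n G
  | p : Fin n → GBRGen n G
  | t : G → Fin n → GBRGen n G

variable (k G : Type) [CommRing k] [Group G] (n : ℕ) (ε : k)

abbrev GBRb (i : Fin (n - 1)) : FreeAlgebra k (GBRGen n G) := FreeAlgebra.ι k (GBRGen.b i)
abbrev GBRbi (i : Fin (n - 1)) : FreeAlgebra k (GBRGen n G) := FreeAlgebra.ι k (GBRGen.bi i)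
abbrev GBRp (j : Fin n) : FreeAlgebra k (GBRGen n G) := FreeAlgebra.ι k (GBRGen.p j)
abbrev GBRt (g : G) (j : Fin n) : FreeAlgebra k (GBRGen n G) := FreeAlgebra.ι k (GBRGen.t g j)

/-- The diagrammatic relations. -/
inductive GBRRel : FreeAlgebra k (GBRGen n G) → FreeAlgebra k (GBRGen n G) → Prop
  | b_inv_r (i : Fin (n - 1)) :
      GBRRel (GBRb k G n i * GBRbi k G n i) (1)
  | b_inv_l (i : Fin (n - 1)) :
      GBRRel (GBRbi k G n i * GBRb k G n i) (1)
  | b_braid (i j : Fin (n - 1)) (h : (j : ℕ) = (i : ℕ) + 1) :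
      GBRRel (GBRb k G n i * GBRb k G n j * GBRb k G n i) (GBRb k G n j * GBRb k G n i * GBRb k G n j)
  | bb_comm (i j : Fin (n - 1)) (h : (i : ℕ) + 1 < (j : ℕ)) :
      GBRRel (GBRb k G n i * GBRb k G n j) (GBRb k G n j * GBRb k G n i)
  | p_sq (j : Fin n) :
      GBRRel (GBRp k G n j * GBRp k G n j) (ε • GBRp k G n j)
  | pp_comm (j l : Fin n) (h : (j : ℕ) < (l : ℕ)) :
      GBRRel (GBRp k G n j * GBRp k G n l) (GBRp k G n l * GBRp k G n j)
  | bp_comm (i : Fin (n - 1)) (l : Fin n) (h : (l : ℕ) ≠ (i : ℕ) ∧ (l : ℕ) ≠ (i : ℕ) + 1) :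
      GBRRel (GBRb k G n i * GBRp k G n l) (GBRp k G n l * GBRb k G n i)
  | bp_slide (i : Fin (n - 1)) (j j' : Fin n) (h : (j : ℕ) = (i : ℕ)) (h' : (j' : ℕ) = (i : ℕ) + 1) :
      GBRRel (GBRb k G n i * GBRp k G n j) (GBRp k G n j' * GBRb k G n i)
  | bp_slide' (i : Fin (n - 1)) (j j' : Fin n) (h : (j : ℕ) = (i : ℕ)) (h' : (j' : ℕ) = (i : ℕ) + 1) :
      GBRRel (GBRb k G n i * GBRp k G n j') (GBRp k G n j * GBRb k G n i)
  | pbp (i : Fin (n - 1)) (j j' : Fin n) (h : (j : ℕ) = (i : ℕ)) (h' : (j' : ℕ) = (i : ℕ) + 1) :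
      GBRRel (GBRp k G n j * GBRb k G n i * GBRp k G n j) (GBRp k G n j * GBRp k G n j')
  | pbb (i : Fin (n - 1)) (j : Fin n) (h : (j : ℕ) = (i : ℕ)) :
      GBRRel (GBRp k G n j * GBRb k G n i * GBRb k G n i) (GBRp k G n j)
  | pbb' (i : Fin (n - 1)) (j' : Fin n) (h' : (j' : ℕ) = (i : ℕ) + 1) :
      GBRRel (GBRp k G n j' * GBRb k G n i * GBRb k G n i) (GBRp k G n j')
  | t_mul (g h' : G) (j : Fin n) :
      GBRRel (GBRt k G n g j * GBRt k G n h' j) (GBRt k G n (g * h') j)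
  | t_one (j : Fin n) :
      GBRRel (GBRt k G n 1 j) (1)
  | tt_comm (g h' : G) (j l : Fin n) (h : j ≠ l) :
      GBRRel (GBRt k G n g j * GBRt k G n h' l) (GBRt k G n h' l * GBRt k G n g j)
  | bt_comm (g : G) (i : Fin (n - 1)) (l : Fin n) (h : (l : ℕ) ≠ (i : ℕ) ∧ (l : ℕ) ≠ (i : ℕ) + 1) :
      GBRRel (GBRb k G n i * GBRt k G n g l) (GBRt k G n g l * GBRb k G n i)
  | bt_slide (g : G) (i : Fin (n - 1)) (j j' : Fin n) (h : (j : ℕ) = (i : ℕ)) (h' : (j' : ℕ) = (i : ℕ) + 1) :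
      GBRRel (GBRb k G n i * GBRt k G n g j) (GBRt k G n g j' * GBRb k G n i)
  | bt_slide' (g : G) (i : Fin (n - 1)) (j j' : Fin n) (h : (j : ℕ) = (i : ℕ)) (h' : (j' : ℕ) = (i : ℕ) + 1) :
      GBRRel (GBRb k G n i * GBRt k G n g j') (GBRt k G n g j * GBRb k G n i)
  | tp_absorb (g : G) (j : Fin n) :
      GBRRel (GBRt k G n g j * GBRp k G n j) (GBRp k G n j)
  | pt_absorb (g : G) (j : Fin n) :
      GBRRel (GBRp k G n j * GBRt k G n g j) (GBRp k G n j)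
  | tp_comm (g : G) (j l : Fin n) (h : j ≠ l) :
      GBRRel (GBRt k G n g j * GBRp k G n l) (GBRp k G n l * GBRt k G n g j)

/-- The diagram algebra: the quotient of the free algebra on the diagram generators by
the diagrammatic relations. -/
abbrev GBRAlg : Type := RingQuot (GBRRel k G n ε)

/-- The augmentation corresponding to the trivial module `𝟙`: a diagram acts by `1`
if it has `n` left-to-right connections, and by `0` otherwise. -/
noncomputable def GBRaug : GBRAlg k G n ε →ₐ[k] k :=
  RingQuot.liftAlgHom k ⟨FreeAlgebra.lift k
      (fun x => match x with
        | GBRGen.b _ => (1 : k)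
        | GBRGen.bi _ => (1 : k)
        | GBRGen.p _ => (0 : k)
        | GBRGen.t _ _ => (1 : k)),
    by rintro x y h
       induction h <;>
         simp [GBRb, GBRbi, GBRp, GBRt, FreeAlgebra.lift_ι_apply]⟩

end GBRsection

/-!
Let `f, g : A → A'` be maps of augmented algebras and let `u : A'` have augmentation `1` and satisfy
`u * f a = g a * u` for all `a`. The alternating sum of the bar chains
`[g a₁ | ⋯ | g a_i | u | f a_{i+1} | ⋯ | f a_q]` is a chain homotopy, so `f` and `g` induce the
same map on `Tor`.

Let `φ : GBR_n(ε) → k[G^n ⋊ B_n]` kill the diagrams with a deleted strand, and let `ψ` be the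
inclusion of the diagrams without one, so that `φ ∘ ψ = id`. Let `u = ∏ j, (1 - ε⁻¹ p_j)`, where
`p_j` deletes the strand `j`. As `p_j ^ 2 = ε p_j`, multiplication by `u` kills every `p_j`, and
`u` commutes with the crossings and the labels, since these permute the `p_j`. Hence
`u * a = ψ (φ a) * u` for all `a`, and `ψ ∘ φ` induces the identity on `Tor`.
-/

section BarComplex

variable {k A} {A' A'' : Type} [Ring A'] [Algebra k A'] [Ring A''] [Algebra k A'']

/-- The bar-notation symbol `[a | x]` in degree `q + 1`, for `a : A` and a bar chain `x` of
degree `q`. -/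
def barCons (q : ℕ) : A →ₗ[k] barC k A q →ₗ[k] barC k A (q + 1) :=
  TensorProduct.mk k A (barC k A q)

theorem barC_hom_ext {q : ℕ} {M : Type} [AddCommGroup M] [Module k M]
    {φ ψ : barC k A (q + 1) →ₗ[k] M} (h : ∀ a x, φ (barCons q a x) = ψ (barCons q a x)) :
    φ = ψ :=
  TensorProduct.ext' (R := k) (M := A) (N := barC k A q) (P₂ := M) h

/-- The map `[a | x] ↦ [φ a | ψ x]` of bar chains. -/
def barConsMap {q r : ℕ} (φ : A →ₗ[k] A') (ψ : barC k A q →ₗ[k] barC k A' r) :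
    barC k A (q + 1) →ₗ[k] barC k A' (r + 1) :=
  TensorProduct.map φ ψ

section Differential

/-- The bar differential `bard`, with its source written as `barC k A (q + 1)` so that the module
structures on source and target are syntactically those of bar chains. -/
def barDifferential (q : ℕ) : barC k A (q + 1) →ₗ[k] barC k A q :=
  bard k A ε q

/-- The bar differential without its first face, i.e. `barB` with its source written as
`barC k A (q + 1)`. -/
def barInnerDifferential (q : ℕ) : barC k A (q + 1) →ₗ[k] barC k A q :=
  barB k A ε q

theorem barDifferential_barCons (q : ℕ) (a : A) (x : barC k A q) :
    barDifferential ε q (barCons q a x) = ε a • x + barInnerDifferential ε q (barCons q a x) :=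
  rfl

theorem barInnerDifferential_barCons_zero (a : A) (x : barC k A 0) :
    barInnerDifferential ε 0 (barCons 0 a x) = -barAct k A ε 0 a x :=
  rfl

theorem barInnerDifferential_barCons_succ (q : ℕ) (a : A) (x : barC k A (q + 1)) :
    barInnerDifferential ε (q + 1) (barCons (q + 1) a x) =
      -barAct k A ε (q + 1) a x - barCons q a (barInnerDifferential ε q x) :=
  rfl

theorem barAct_zero (a : A) (x : barC k A 0) : barAct k A ε 0 a x = ε a • x :=
  rfl

theorem barAct_barCons (q : ℕ) (a b : A) (x : barC k A q) :
    barAct k A ε (q + 1) a (barCons q b x) = barCons q (a * b) x :=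
  rfl

end Differential

/-- The map of bar chains `[a₁ | ⋯ | a_q] ↦ [f a₁ | ⋯ | f a_q]` induced by an algebra map. -/
def barMap (f : A →ₐ[k] A') : ∀ q : ℕ, barC k A q →ₗ[k] barC k A' q
  | 0 => LinearMap.id
  | q + 1 => barConsMap f.toLinearMap (barMap f q)

theorem barMap_zero_eq (f g : A →ₐ[k] A') : barMap f 0 = barMap g 0 :=
  rfl

theorem barMap_barCons (f : A →ₐ[k] A') (q : ℕ) (a : A) (x : barC k A q) :
    barMap f (q + 1) (barCons q a x) = barCons q (f a) (barMap f q x) :=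
  rfl

theorem barMap_id (q : ℕ) : barMap (AlgHom.id k A) q = LinearMap.id := by
  induction q with
  | zero => rfl
  | succ q ih =>
    refine barC_hom_ext fun a x => ?_
    rw [barMap_barCons, ih]
    rfl

theorem barMap_comp (g : A' →ₐ[k] A'') (f : A →ₐ[k] A') (q : ℕ) :
    barMap (g.comp f) q = barMap g q ∘ₗ barMap f q := by
  induction q with
  | zero => rfl
  | succ q ih =>
    refine barC_hom_ext fun a x => ?_
    simp only [LinearMap.comp_apply, barMap_barCons, ih, AlgHom.comp_apply]

section ChainMap

variable {ε} {ε' : A' →ₐ[k] k} {f : A →ₐ[k] A'}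

theorem barMap_barAct (hf : ε'.comp f = ε) (q : ℕ) (a : A) (x : barC k A q) :
    barMap f q (barAct k A ε q a x) = barAct k A' ε' q (f a) (barMap f q x) := by
  subst hf
  cases q with
  | zero => rfl
  | succ q =>
    suffices barMap f (q + 1) ∘ₗ barAct k A (ε'.comp f) (q + 1) a =
        barAct k A' ε' (q + 1) (f a) ∘ₗ barMap f (q + 1) from LinearMap.congr_fun this x
    refine barC_hom_ext fun b y => ?_
    simp only [LinearMap.comp_apply, barAct_barCons, barMap_barCons, map_mul]

theorem barMap_barInnerDifferential (hf : ε'.comp f = ε) (q : ℕ) (x : barC k A (q + 1)) :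
    barMap f q (barInnerDifferential ε q x) =
      barInnerDifferential ε' q (barMap f (q + 1) x) := by
  suffices h : barMap f q ∘ₗ barInnerDifferential ε q =
      barInnerDifferential ε' q ∘ₗ barMap f (q + 1) from LinearMap.congr_fun h x
  clear x
  induction q with
  | zero =>
    refine barC_hom_ext fun a x => ?_
    simp only [LinearMap.comp_apply, barMap_barCons, barInnerDifferential_barCons_zero, map_neg,
      barMap_barAct hf]
  | succ q ih =>
    refine barC_hom_ext fun a x => ?_
    have ih := LinearMap.congr_fun ih x
    simp only [LinearMap.comp_apply] at ih
    simp only [LinearMap.comp_apply, barMap_barCons, barInnerDifferential_barCons_succ, map_sub,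
      map_neg, barMap_barAct hf, ih]

theorem barMap_barDifferential (hf : ε'.comp f = ε) (q : ℕ) (x : barC k A (q + 1)) :
    barMap f q (barDifferential ε q x) = barDifferential ε' q (barMap f (q + 1) x) := by
  suffices barMap f q ∘ₗ barDifferential ε q = barDifferential ε' q ∘ₗ barMap f (q + 1) from
    LinearMap.congr_fun this x
  refine barC_hom_ext fun a x => ?_
  have haug : ε' (f a) = ε a := DFunLike.congr_fun hf a
  simp only [LinearMap.comp_apply, barDifferential_barCons, barMap_barCons, map_add, map_smul,
    barMap_barInnerDifferential hf, haug]

end ChainMap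

section Homotopy

variable {ε} {ε' : A' →ₐ[k] k} {f g : A →ₐ[k] A'} {u : A'}

variable (f g u) in
/-- The chain homotopy
`[a₁ | ⋯ | a_q] ↦ ∑ i, (-1) ^ i • [g a₁ | ⋯ | g a_i | u | f a_{i+1} | ⋯ | f a_q]`
between the maps induced by `f` and `g`, for `u` satisfying `u * f a = g a * u` for all `a`. -/
def barHomotopy : ∀ q : ℕ, barC k A q →ₗ[k] barC k A' (q + 1)
  | 0 => barCons 0 u ∘ₗ barMap f 0
  | q + 1 => barCons (q + 1) u ∘ₗ barMap f (q + 1) - barConsMap g.toLinearMap (barHomotopy q)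

theorem barHomotopy_zero (x : barC k A 0) :
    barHomotopy f g u 0 x = barCons 0 u (barMap f 0 x) :=
  rfl

theorem barHomotopy_barCons (q : ℕ) (a : A) (x : barC k A q) :
    barHomotopy f g u (q + 1) (barCons q a x) =
      barCons (q + 1) u (barMap f (q + 1) (barCons q a x)) -
        barCons (q + 1) (g a) (barHomotopy f g u q x) :=
  rfl

theorem barHomotopy_barAct (hu : ∀ a, SemiconjBy u (f a) (g a)) (q : ℕ) (a : A)
    (x : barC k A q) :
    barHomotopy f g u q (barAct k A ε q a x) =
      barAct k A' ε' (q + 1) (g a) (barHomotopy f g u q x) +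
        barCons q u (barMap f q (barAct k A ε q a x)) - barCons q (u * f a) (barMap f q x) := by
  cases q with
  | zero =>
    rw [barHomotopy_zero, barHomotopy_zero, barAct_barCons, (hu a).eq]
    abel
  | succ q =>
    suffices barHomotopy f g u (q + 1) ∘ₗ barAct k A ε (q + 1) a =
        barAct k A' ε' (q + 2) (g a) ∘ₗ barHomotopy f g u (q + 1) +
          barCons (q + 1) u ∘ₗ barMap f (q + 1) ∘ₗ barAct k A ε (q + 1) a -
            barCons (q + 1) (u * f a) ∘ₗ barMap f (q + 1) from LinearMap.congr_fun this x
    refine barC_hom_ext fun b y => ?_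
    simp only [LinearMap.comp_apply, LinearMap.add_apply, LinearMap.sub_apply, barAct_barCons,
      barHomotopy_barCons, map_sub, map_mul, (hu a).eq]
    abel

theorem barInnerDifferential_barHomotopy_zero (hu₁ : ε' u = 1) (x : barC k A 0) :
    barInnerDifferential ε' 0 (barHomotopy f g u 0 x) = -barMap g 0 x := by
  rw [barHomotopy_zero, barInnerDifferential_barCons_zero, barAct_zero, hu₁, one_smul,
    barMap_zero_eq f g]

theorem barInnerDifferential_barHomotopy_add (hf : ε'.comp f = ε)
    (hu : ∀ a, SemiconjBy u (f a) (g a)) (hu₁ : ε' u = 1) (q : ℕ) (x : barC k A (q + 1)) :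
    barInnerDifferential ε' (q + 1) (barHomotopy f g u (q + 1) x) +
      barHomotopy f g u q (barInnerDifferential ε q x) = -barMap g (q + 1) x := by
  suffices h : barInnerDifferential ε' (q + 1) ∘ₗ barHomotopy f g u (q + 1) +
      barHomotopy f g u q ∘ₗ barInnerDifferential ε q = -barMap g (q + 1) from
    LinearMap.congr_fun h x
  clear x
  induction q with
  | zero =>
    refine barC_hom_ext fun a y => ?_
    simp only [LinearMap.comp_apply, LinearMap.add_apply, LinearMap.neg_apply,
      barHomotopy_barCons, map_sub, map_neg, barMap_barCons, barAct_barCons,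
      barInnerDifferential_barCons_succ, barInnerDifferential_barCons_zero,
      barInnerDifferential_barHomotopy_zero hu₁, barHomotopy_barAct (ε' := ε') hu, barMap_barAct hf]
    abel
  | succ q ih =>
    refine barC_hom_ext fun a y => ?_
    have ih := eq_sub_of_add_eq (LinearMap.congr_fun ih y)
    simp only [LinearMap.comp_apply, LinearMap.neg_apply] at ih
    simp only [LinearMap.comp_apply, LinearMap.add_apply, LinearMap.neg_apply,
      barHomotopy_barCons, map_sub, map_neg, barMap_barCons, barAct_barCons,
      barInnerDifferential_barCons_succ, ih,
      barMap_barInnerDifferential hf, barHomotopy_barAct (ε' := ε') hu, barMap_barAct hf]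
    abel

theorem barDifferential_barHomotopy_add (hf : ε'.comp f = ε) (hg : ε'.comp g = ε)
    (hu : ∀ a, SemiconjBy u (f a) (g a)) (hu₁ : ε' u = 1) (q : ℕ) (x : barC k A (q + 1)) :
    barDifferential ε' (q + 1) (barHomotopy f g u (q + 1) x) +
      barHomotopy f g u q (barDifferential ε q x) = barMap f (q + 1) x - barMap g (q + 1) x := by
  suffices barDifferential ε' (q + 1) ∘ₗ barHomotopy f g u (q + 1) +
      barHomotopy f g u q ∘ₗ barDifferential ε q = barMap f (q + 1) - barMap g (q + 1) from
    LinearMap.congr_fun this x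
  refine barC_hom_ext fun a y => ?_
  have hinner := barInnerDifferential_barHomotopy_add hf hu hu₁ q (barCons q a y)
  have haug : ε' (g a) = ε a := DFunLike.congr_fun hg a
  simp only [LinearMap.comp_apply, LinearMap.add_apply, LinearMap.sub_apply]
  rw [sub_eq_add_neg, ← hinner, barHomotopy_barCons]
  simp only [map_sub, map_add, map_smul, barDifferential_barCons, hu₁, one_smul, haug]
  abel

theorem barMap_sub_barMap_mem_range (hf : ε'.comp f = ε) (hg : ε'.comp g = ε)
    (hu : ∀ a, SemiconjBy u (f a) (g a)) (hu₁ : ε' u = 1) (q : ℕ) {x : barC k A q}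
    (hx : x ∈ barCycles k A ε q) :
    barMap f q x - barMap g q x ∈ LinearMap.range (barDifferential ε' q) := by
  cases q with
  | zero =>
    rw [barMap_zero_eq f g, sub_self]
    exact zero_mem _
  | succ q =>
    have hx : barDifferential ε q x = 0 := hx
    refine ⟨barHomotopy f g u (q + 1) x, ?_⟩
    rw [← barDifferential_barHomotopy_add hf hg hu hu₁, hx, map_zero, add_zero]

end Homotopy

section Tor

variable {ε} {ε' : A' →ₐ[k] k} {ε'' : A'' →ₐ[k] k}

theorem barMap_mem_barCycles {f : A →ₐ[k] A'} (hf : ε'.comp f = ε) (q : ℕ) {x : barC k A q}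
    (hx : x ∈ barCycles k A ε q) : barMap f q x ∈ barCycles k A' ε' q := by
  cases q with
  | zero => exact Submodule.mem_top
  | succ q =>
    have hx : barDifferential ε q x = 0 := hx
    change barDifferential ε' q (barMap f (q + 1) x) = 0
    rw [← barMap_barDifferential hf, hx, map_zero]

variable (ε) in
/-- The homology class of a bar cycle. -/
def barTorMk (q : ℕ) : barCycles k A ε q →ₗ[k] barTor k A ε q :=
  Submodule.mkQ _

theorem barTorMk_surjective (q : ℕ) : Function.Surjective (barTorMk ε q) :=
  Submodule.mkQ_surjective _

theorem barTorMk_eq_iff {q : ℕ} {x y : barCycles k A ε q} :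
    barTorMk ε q x = barTorMk ε q y ↔
      (x : barC k A q) - y ∈ LinearMap.range (barDifferential ε q) :=
  Submodule.Quotient.eq _

/-- The map on `Tor` induced by an augmentation-preserving algebra map. -/
def barTorMap (f : A →ₐ[k] A') (hf : ε'.comp f = ε) (q : ℕ) :
    barTor k A ε q →ₗ[k] barTor k A' ε' q :=
  Submodule.mapQ _ _ ((barMap f q).restrict fun _ => barMap_mem_barCycles hf q) <| by
    rintro x ⟨y, hy⟩
    exact ⟨barMap f (q + 1) y,
      (barMap_barDifferential hf q y).symm.trans (congrArg (barMap f q) hy)⟩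

theorem barTorMap_barTorMk {f : A →ₐ[k] A'} (hf : ε'.comp f = ε) (q : ℕ)
    (x : barCycles k A ε q) :
    barTorMap f hf q (barTorMk ε q x) =
      barTorMk ε' q ⟨barMap f q x, barMap_mem_barCycles hf q x.2⟩ :=
  rfl

theorem barTorMap_id (q : ℕ) :
    barTorMap (AlgHom.id k A) (AlgHom.comp_id ε) q = LinearMap.id := by
  refine LinearMap.ext <| (barTorMk_surjective q).forall.2 fun x => ?_
  simp only [barTorMap_barTorMk, barMap_id, LinearMap.id_apply, Subtype.coe_eta]

theorem barTorMap_comp {f : A →ₐ[k] A'} {g : A' →ₐ[k] A''} (hf : ε'.comp f = ε)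
    (hg : ε''.comp g = ε') (q : ℕ) :
    barTorMap (g.comp f) (by rw [← AlgHom.comp_assoc, hg, hf]) q =
      barTorMap g hg q ∘ₗ barTorMap f hf q := by
  refine LinearMap.ext <| (barTorMk_surjective q).forall.2 fun x => ?_
  simp only [LinearMap.comp_apply, barTorMap_barTorMk, barMap_comp]

theorem barTorMap_eq_of_semiconjBy {f g : A →ₐ[k] A'} (hf : ε'.comp f = ε)
    (hg : ε'.comp g = ε) {u : A'} (hu : ∀ a, SemiconjBy u (f a) (g a)) (hu₁ : ε' u = 1)
    (q : ℕ) : barTorMap f hf q = barTorMap g hg q := by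
  refine LinearMap.ext <| (barTorMk_surjective q).forall.2 fun x => ?_
  rw [barTorMap_barTorMk, barTorMap_barTorMk, barTorMk_eq_iff]
  exact barMap_sub_barMap_mem_range hf hg hu hu₁ q x.2

theorem barTorMap_comp_eq_id_of_semiconjBy {f : A →ₐ[k] A'} {g : A' →ₐ[k] A}
    (hf : ε'.comp f = ε) (hg : ε.comp g = ε') {u : A} (hu : ∀ a, SemiconjBy u a (g (f a)))
    (hu₁ : ε u = 1) (q : ℕ) : barTorMap g hg q ∘ₗ barTorMap f hf q = LinearMap.id := by
  rw [← barTorMap_comp, ← barTorMap_id]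
  exact (barTorMap_eq_of_semiconjBy _ _ hu hu₁ q).symm

/-- An equivalence of augmented algebras up to natural transformation: two algebra maps whose
composites are intertwined with the identities by elements of augmentation `1` induce mutually
inverse maps on `Tor`. -/
def barTorEquiv (f : A →ₐ[k] A') (g : A' →ₐ[k] A) (hf : ε'.comp f = ε) (hg : ε.comp g = ε')
    {u : A} (hu : ∀ a, SemiconjBy u a (g (f a))) (hu₁ : ε u = 1)
    {v : A'} (hv : ∀ b, SemiconjBy v b (f (g b))) (hv₁ : ε' v = 1) (q : ℕ) :
    barTor k A ε q ≃ₗ[k] barTor k A' ε' q :=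
  LinearEquiv.ofLinearMap (barTorMap f hf q) (barTorMap g hg q)
    (barTorMap_comp_eq_id_of_semiconjBy hg hf hv hv₁ q)
    (barTorMap_comp_eq_id_of_semiconjBy hf hg hu hu₁ q)

end Tor

end BarComplex

section Generators

theorem semiconjBy_of_adjoin_eq_top {k A B : Type*} [CommSemiring k] [Semiring A] [Algebra k A]
    [Semiring B] [Algebra k B] {s : Set A} (hs : Algebra.adjoin k s = ⊤) {f g : A →ₐ[k] B} {u : B}
    (h : ∀ a ∈ s, SemiconjBy u (f a) (g a)) (a : A) : SemiconjBy u (f a) (g a) := by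
  have ha : a ∈ Algebra.adjoin k s := hs ▸ Algebra.mem_top
  induction ha using Algebra.adjoin_induction with
  | mem a ha => exact h a ha
  | algebraMap c =>
    rw [AlgHom.commutes, AlgHom.commutes]
    exact (Algebra.commutes c u).symm
  | add a b _ _ iha ihb =>
    rw [map_add, map_add]
    exact iha.add_right ihb
  | mul a b _ _ iha ihb =>
    rw [map_mul, map_mul]
    exact iha.mul_right ihb

theorem semiconjBy_of_closure_eq_top {B H ι : Type*} [Group B] [Group H] {s : Set B}
    (hs : Subgroup.closure s = ⊤) (f : B →* H) (π : B →* Equiv.Perm ι) {t : ι → H}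
    (h : ∀ b ∈ s, ∀ i, SemiconjBy (f b) (t i) (t (π b i))) (b : B) (i : ι) :
    SemiconjBy (f b) (t i) (t (π b i)) := by
  have hb : b ∈ Subgroup.closure s := hs ▸ Subgroup.mem_top b
  induction hb using Subgroup.closure_induction generalizing i with
  | mem b hb => exact h b hb i
  | one => simp only [map_one, Equiv.Perm.one_apply, SemiconjBy.one_left]
  | mul b c _ _ ihb ihc =>
    rw [map_mul, map_mul]
    exact (ihb (π c i)).mul_left (ihc i)
  | inv b _ ih =>
    rw [map_inv, map_inv, SemiconjBy.inv_symm_left_iff]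
    simpa only [Equiv.Perm.inv_def, Equiv.apply_symm_apply] using ih ((π b)⁻¹ i)

theorem semiconjBy_noncommProd {M ι : Type*} [Monoid M] {x : M} {f g : ι → M}
    (h : ∀ i, SemiconjBy x (f i) (g i)) (s : Finset ι)
    (hf : (s : Set ι).Pairwise (Function.onFun Commute f))
    (hg : (s : Set ι).Pairwise (Function.onFun Commute g)) :
    SemiconjBy x (s.noncommProd f hf) (s.noncommProd g hg) := by
  classical
  induction s using Finset.induction_on with
  | empty => simp only [Finset.noncommProd_empty, SemiconjBy.one_right]
  | insert i s hi ih =>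
    rw [Finset.noncommProd_insert_of_notMem _ _ _ _ hi,
      Finset.noncommProd_insert_of_notMem _ _ _ _ hi]
    exact (h i).mul_right (ih _ _)

theorem commute_noncommProd_univ_of_perm {M ι : Type*} [Monoid M] [Fintype ι] {x : M} {f : ι → M}
    (hf : ((Finset.univ : Finset ι) : Set ι).Pairwise (Function.onFun Commute f))
    (σ : Equiv.Perm ι) (h : ∀ i, SemiconjBy x (f i) (f (σ i))) :
    Commute x (Finset.univ.noncommProd f hf) := by
  have hσ : ((Finset.univ : Finset ι) : Set ι).Pairwise (Function.onFun Commute (f ∘ σ)) :=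
    fun i _ j _ hij => hf (Finset.mem_coe.2 (Finset.mem_univ _))
      (Finset.mem_coe.2 (Finset.mem_univ _)) (σ.injective.ne hij)
  have hreindex : Finset.univ.noncommProd (f ∘ σ) hσ = Finset.univ.noncommProd f hf := by
    simp only [Finset.noncommProd, ← Multiset.map_map, Multiset.map_univ_val_equiv]
  have := semiconjBy_noncommProd (g := f ∘ σ) h Finset.univ hf hσ
  rwa [hreindex] at this

end Generators

section BraidGroups

section BraidGen

variable {n : ℕ} {i : Fin (n - 1)}

theorem braidGen_eq_swap {j j' : Fin n} (h : (j : ℕ) = i) (h' : (j' : ℕ) = i + 1) :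
    braidGen n i = Equiv.swap j j' :=
  congrArg₂ Equiv.swap (Fin.ext h.symm) (Fin.ext h'.symm)

theorem braidGen_left {j j' : Fin n} (h : (j : ℕ) = i) (h' : (j' : ℕ) = i + 1) :
    braidGen n i j = j' := by
  rw [braidGen_eq_swap h h', Equiv.swap_apply_left]

theorem braidGen_right {j j' : Fin n} (h : (j : ℕ) = i) (h' : (j' : ℕ) = i + 1) :
    braidGen n i j' = j := by
  rw [braidGen_eq_swap h h', Equiv.swap_apply_right]

theorem braidGen_of_ne {l : Fin n} (h : (l : ℕ) ≠ i ∧ (l : ℕ) ≠ i + 1) : braidGen n i l = l :=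
  Equiv.swap_apply_of_ne_of_ne (Fin.val_ne_iff.1 h.1) (Fin.val_ne_iff.1 h.2)

theorem forall_braidGen {P : Fin n → Fin n → Prop}
    (left : ∀ j j' : Fin n, (j : ℕ) = i → (j' : ℕ) = i + 1 → P j j')
    (right : ∀ j j' : Fin n, (j : ℕ) = i → (j' : ℕ) = i + 1 → P j' j)
    (off : ∀ l : Fin n, (l : ℕ) ≠ i ∧ (l : ℕ) ≠ i + 1 → P l l) (j : Fin n) :
    P j (braidGen n i j) := by
  rw [braidGen, Equiv.swap_apply_def]
  split_ifs with hleft hright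
  · exact left _ _ (congrArg Fin.val hleft) rfl
  · exact right _ _ rfl (congrArg Fin.val hright)
  · exact off j ⟨Fin.val_ne_iff.2 hleft, Fin.val_ne_iff.2 hright⟩

end BraidGen

theorem permMulAut_mulSingle {G : Type} [Group G] {n : ℕ} (σ : Equiv.Perm (Fin n)) (j : Fin n)
    (g : G) : permMulAut G n σ (Pi.mulSingle j g) = Pi.mulSingle (σ j) g := by
  change Pi.mulSingle j g ∘ σ.symm = _
  rw [Pi.mulSingle_comp_equiv, Equiv.symm_symm]

namespace BraidGroup

variable {n : ℕ}

theorem of_braid {i j : Fin (n - 1)} (h : (i : ℕ) + 1 = j) :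
    (PresentedGroup.of i * PresentedGroup.of j * PresentedGroup.of i : BraidGroup n) =
      PresentedGroup.of j * PresentedGroup.of i * PresentedGroup.of j :=
  mul_inv_eq_one.1 <| PresentedGroup.one_of_mem (rels := braidRels (n - 1)) ⟨i, j, .inl ⟨h, rfl⟩⟩

theorem of_commute {i j : Fin (n - 1)} (h : (i : ℕ) + 1 < j) :
    Commute (PresentedGroup.of i : BraidGroup n) (PresentedGroup.of j) :=
  mul_inv_eq_one.1 <| PresentedGroup.one_of_mem (rels := braidRels (n - 1)) ⟨i, j, .inr ⟨h, rfl⟩⟩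

theorem braidToPerm_of (i : Fin (n - 1)) : braidToPerm n (.of i) = braidGen n i :=
  PresentedGroup.toGroup.of _

/-- The group homomorphism out of `B_n` determined by a family of elements satisfying the Artin
relations. -/
def lift {H : Type*} [Group H] (s : Fin (n - 1) → H)
    (hbraid : ∀ i j : Fin (n - 1), (i : ℕ) + 1 = j → s i * s j * s i = s j * s i * s j)
    (hcomm : ∀ i j : Fin (n - 1), (i : ℕ) + 1 < j → Commute (s i) (s j)) : BraidGroup n →* H :=
  PresentedGroup.toGroup (f := s) <| by
    rintro _ ⟨i, j, ⟨hij, rfl⟩ | ⟨hij, rfl⟩⟩ <;>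
      simp only [map_mul, map_inv, FreeGroup.lift_apply_of, mul_inv_eq_one]
    · exact hbraid i j hij
    · exact (hcomm i j hij).eq

theorem lift_of {H : Type*} [Group H] (s : Fin (n - 1) → H) (hbraid hcomm) (i : Fin (n - 1)) :
    lift s hbraid hcomm (.of i) = s i :=
  PresentedGroup.toGroup.of _

end BraidGroup

/-- The group `G^n ⋊ B_n` of braids on `n` strands labelled by elements of `G`. -/
abbrev LabelledBraidGroup (G : Type) [Group G] (n : ℕ) : Type :=
  (Fin n → G) ⋊[(permMulAut G n).comp (braidToPerm n)] BraidGroup n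

namespace LabelledBraidGroup

variable {G : Type} [Group G] {n : ℕ}

variable (G) in
/-- The braid with a single positive crossing, of the strands `i` and `i + 1`, and trivial
labels. -/
def crossing (i : Fin (n - 1)) : LabelledBraidGroup G n :=
  SemidirectProduct.inr (.of i)

/-- The trivial braid with label `g` on strand `j` and trivial labels elsewhere, as a
homomorphism in `g`. -/
def label (j : Fin n) : G →* LabelledBraidGroup G n :=
  SemidirectProduct.inl.comp (MonoidHom.mulSingle (fun _ => G) j)

theorem crossing_braid {i j : Fin (n - 1)} (h : (i : ℕ) + 1 = j) :
    crossing G i * crossing G j * crossing G i = crossing G j * crossing G i * crossing G j := by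
  simp only [crossing, ← map_mul, BraidGroup.of_braid h]

theorem crossing_commute {i j : Fin (n - 1)} (h : (i : ℕ) + 1 < j) :
    Commute (crossing G i) (crossing G j) :=
  (BraidGroup.of_commute h).map _

theorem label_commute {j l : Fin n} (h : j ≠ l) (g g' : G) : Commute (label j g) (label l g') :=
  (Pi.mulSingle_commute (f := fun _ => G) h g g').map
    (SemidirectProduct.inl : (Fin n → G) →* LabelledBraidGroup G n)

theorem semiconjBy_crossing_label (i : Fin (n - 1)) (g : G) (j : Fin n) :
    SemiconjBy (crossing G i) (label j g) (label (braidGen n i j) g) := by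
  have hconj : label (braidGen n i j) g = crossing G i * label j g * (crossing G i)⁻¹ := by
    rw [← BraidGroup.braidToPerm_of, crossing, ← map_inv]
    exact (congrArg SemidirectProduct.inl (permMulAut_mulSingle _ j g)).symm.trans
      (SemidirectProduct.inl_aut _ _)
  exact mul_inv_eq_iff_eq_mul.1 hconj.symm

theorem hom_ext {H : Type*} [Group H] {φ ψ : LabelledBraidGroup G n →* H}
    (hcrossing : ∀ i, φ (crossing G i) = ψ (crossing G i))
    (hlabel : ∀ j g, φ (label j g) = ψ (label j g)) : φ = ψ :=
  SemidirectProduct.hom_ext (MonoidHom.pi_ext hlabel) (PresentedGroup.ext hcrossing)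

/-- The homomorphism out of `G^n ⋊ B_n` determined by the images of the crossings and labels. -/
def lift {H : Type*} [Group H] (s : Fin (n - 1) → H) (t : Fin n → G →* H)
    (hbraid : ∀ i j : Fin (n - 1), (i : ℕ) + 1 = j → s i * s j * s i = s j * s i * s j)
    (hcomm : ∀ i j : Fin (n - 1), (i : ℕ) + 1 < j → Commute (s i) (s j))
    (hlabel : Pairwise fun j l => ∀ g g', Commute (t j g) (t l g'))
    (hslide : ∀ i g j, SemiconjBy (s i) (t j g) (t (braidGen n i j) g)) :
    LabelledBraidGroup G n →* H :=
  SemidirectProduct.lift (MonoidHom.noncommPiCoprod t hlabel) (BraidGroup.lift s hbraid hcomm) <| by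
    refine fun β => MonoidHom.pi_ext fun j g => ?_
    have hconj := semiconjBy_of_closure_eq_top (PresentedGroup.closure_range_of _)
      (BraidGroup.lift s hbraid hcomm) (braidToPerm n) (t := fun j => t j g)
      (by
        rintro _ ⟨i, rfl⟩ j
        rw [BraidGroup.lift_of, BraidGroup.braidToPerm_of]
        exact hslide i g j) β j
    have hperm := permMulAut_mulSingle (braidToPerm n β) j g
    simp only [MonoidHom.comp_apply, MulEquiv.coe_toMonoidHom, hperm,
      MonoidHom.noncommPiCoprod_mulSingle, MulAut.conj_apply]
    exact (mul_inv_eq_iff_eq_mul.2 hconj.eq).symm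

section Lift

variable {H : Type*} [Group H] (s : Fin (n - 1) → H) (t : Fin n → G →* H)
  (hbraid hcomm hlabel hslide)

theorem lift_crossing (i : Fin (n - 1)) :
    lift s t hbraid hcomm hlabel hslide (crossing G i) = s i :=
  (SemidirectProduct.lift_inr _ _ _ _).trans (BraidGroup.lift_of s hbraid hcomm i)

theorem lift_label (j : Fin n) (g : G) :
    lift s t hbraid hcomm hlabel hslide (label j g) = t j g :=
  (SemidirectProduct.lift_inl _ _ _ _).trans (MonoidHom.noncommPiCoprod_mulSingle _ _ _)

end Lift

end LabelledBraidGroup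

end BraidGroups

section BraidedRookAlgebra

variable {k G : Type} [CommRing k] [Group G] {n : ℕ} {ε : k}

namespace GBRAlg

variable (k ε) in
/-- The class of a generating diagram in the braided rook algebra. -/
def gen (x : GBRGen n G) : GBRAlg k G n ε :=
  RingQuot.mkAlgHom k _ (FreeAlgebra.ι k x)

theorem adjoin_range_gen : Algebra.adjoin k (Set.range (gen (n := n) (G := G) k ε)) = ⊤ := by
  have himage : Set.range (gen (n := n) (G := G) k ε) =
      RingQuot.mkAlgHom k (GBRRel k G n ε) '' Set.range (FreeAlgebra.ι k) :=
    Set.range_comp _ _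
  rw [himage, ← AlgHom.map_adjoin, FreeAlgebra.adjoin_range_ι, Algebra.map_top,
    AlgHom.range_eq_top]
  exact RingQuot.mkAlgHom_surjective k _

theorem gen_mul_gen_eq_one {x y : GBRGen n G}
    (h : GBRRel k G n ε (FreeAlgebra.ι k x * FreeAlgebra.ι k y) 1) :
    gen k ε x * gen k ε y = 1 := by
  simpa only [gen, map_mul, map_one] using RingQuot.mkAlgHom_rel k h

theorem gen_mul_gen_eq_gen {x y z : GBRGen n G}
    (h : GBRRel k G n ε (FreeAlgebra.ι k x * FreeAlgebra.ι k y) (FreeAlgebra.ι k z)) :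
    gen k ε x * gen k ε y = gen k ε z := by
  simpa only [gen, map_mul] using RingQuot.mkAlgHom_rel k h

theorem semiconjBy_gen {x y z : GBRGen n G}
    (h : GBRRel k G n ε (FreeAlgebra.ι k x * FreeAlgebra.ι k y)
      (FreeAlgebra.ι k z * FreeAlgebra.ι k x)) :
    SemiconjBy (gen k ε x) (gen k ε y) (gen k ε z) := by
  simpa only [SemiconjBy, gen, map_mul] using RingQuot.mkAlgHom_rel k h

variable (k G ε) in
/-- The positive crossing of the strands `i` and `i + 1`, with inverse the negative crossing. -/
def crossing (i : Fin (n - 1)) : (GBRAlg k G n ε)ˣ where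
  val := gen k ε (.b i)
  inv := gen k ε (.bi i)
  val_inv := gen_mul_gen_eq_one (.b_inv_r i)
  inv_val := gen_mul_gen_eq_one (.b_inv_l i)

variable (k ε) in
/-- The diagram without crossings with label `g` on strand `j` and trivial labels elsewhere, as a
homomorphism in `g`. -/
def label (j : Fin n) : G →* (GBRAlg k G n ε)ˣ :=
  MonoidHom.toHomUnits
    { toFun g := gen k ε (.t g j)
      map_one' := (RingQuot.mkAlgHom_rel k (.t_one j)).trans (map_one _)
      map_mul' g h := (gen_mul_gen_eq_gen (.t_mul g h j)).symm }

variable (k G ε) in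
/-- The diagram without crossings in which the strand `j` is deleted. -/
def deletion (j : Fin n) : GBRAlg k G n ε :=
  gen k ε (.p j)

theorem crossing_braid {i j : Fin (n - 1)} (h : (i : ℕ) + 1 = j) :
    crossing k G ε i * crossing k G ε j * crossing k G ε i =
      crossing k G ε j * crossing k G ε i * crossing k G ε j := by
  have hgen : gen (G := G) k ε (.b i) * gen k ε (.b j) * gen k ε (.b i) =
      gen k ε (.b j) * gen k ε (.b i) * gen k ε (.b j) := by
    simpa only [gen, map_mul] using RingQuot.mkAlgHom_rel k (GBRRel.b_braid (ε := ε) i j h.symm)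
  exact Units.ext hgen

theorem crossing_commute {i j : Fin (n - 1)} (h : (i : ℕ) + 1 < j) :
    Commute (crossing k G ε i) (crossing k G ε j) :=
  Units.ext <| semiconjBy_gen (.bb_comm i j h)

theorem label_commute {j l : Fin n} (h : j ≠ l) (g g' : G) :
    Commute (label k ε j g) (label k ε l g') :=
  Units.ext <| semiconjBy_gen (.tt_comm g g' j l h)

theorem semiconjBy_crossing_label (i : Fin (n - 1)) (g : G) (j : Fin n) :
    SemiconjBy (crossing k G ε i) (label k ε j g) (label k ε (braidGen n i j) g) := by
  refine Units.ext ?_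
  refine forall_braidGen (P := fun j l => SemiconjBy (gen k ε (.b i)) (gen k ε (.t g j))
    (gen k ε (.t g l))) (fun j j' h h' => ?_) (fun j j' h h' => ?_)
    (fun l h => ?_) j
  · exact semiconjBy_gen (.bt_slide g i j j' h h')
  · exact semiconjBy_gen (.bt_slide' g i j j' h h')
  · exact semiconjBy_gen (.bt_comm g i l h)

theorem deletion_mul_self (j : Fin n) :
    deletion k G ε j * deletion k G ε j = ε • deletion k G ε j := by
  have hgen : gen (G := G) k ε (.p j) * gen k ε (.p j) = ε • gen k ε (.p j) := by
    simpa only [gen, map_mul, map_smul] using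
      RingQuot.mkAlgHom_rel k (GBRRel.p_sq (k := k) (G := G) j)
  exact hgen

theorem deletion_commute (j l : Fin n) : Commute (deletion k G ε j) (deletion k G ε l) := by
  rcases lt_trichotomy j l with h | rfl | h
  · exact semiconjBy_gen (.pp_comm j l h)
  · exact Commute.refl _
  · exact (semiconjBy_gen (.pp_comm l j h)).symm

theorem semiconjBy_crossing_deletion (i : Fin (n - 1)) (j : Fin n) :
    SemiconjBy (crossing k G ε i : GBRAlg k G n ε) (deletion k G ε j)
      (deletion k G ε (braidGen n i j)) := by
  refine forall_braidGen (P := fun j l => SemiconjBy (gen k ε (.b i)) (gen k ε (.p j))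
    (gen k ε (.p l))) (fun j j' h h' => ?_) (fun j j' h h' => ?_) (fun l h => ?_) j
  · exact semiconjBy_gen (.bp_slide i j j' h h')
  · exact semiconjBy_gen (.bp_slide' i j j' h h')
  · exact semiconjBy_gen (.bp_comm i l h)

theorem commute_label_deletion (j l : Fin n) (g : G) :
    Commute (label k ε j g : GBRAlg k G n ε) (deletion k G ε l) := by
  rcases eq_or_ne j l with rfl | h
  · exact (gen_mul_gen_eq_gen (.tp_absorb g j)).trans (gen_mul_gen_eq_gen (.pt_absorb g j)).symm
  · exact semiconjBy_gen (.tp_comm g j l h)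

theorem GBRaug_gen (x : GBRGen n G) :
    GBRaug k G n ε (gen k ε x) = match x with
      | .b _ | .bi _ | .t _ _ => 1
      | .p _ => 0 := by
  rw [GBRaug, gen, RingQuot.liftAlgHom_mkAlgHom_apply]
  cases x <;> rw [FreeAlgebra.lift_ι_apply]

section ToGroupAlgebra

variable (k) in
/-- The image of a generating diagram in `k[G^n ⋊ B_n]`: a diagram with a deleted strand is sent
to zero. -/
def genToGroupAlgebra : GBRGen n G → MonoidAlgebra k (LabelledBraidGroup G n)
  | .b i => .of k _ (LabelledBraidGroup.crossing G i)
  | .bi i => .of k _ (LabelledBraidGroup.crossing G i)⁻¹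
  | .p _ => 0
  | .t g j => .of k _ (LabelledBraidGroup.label j g)

theorem lift_genToGroupAlgebra_eq_of_rel {x y : FreeAlgebra k (GBRGen n G)}
    (h : GBRRel k G n ε x y) :
    FreeAlgebra.lift k (genToGroupAlgebra k) x = FreeAlgebra.lift k (genToGroupAlgebra k) y := by
  cases h <;> simp only [map_mul, map_smul, map_one, FreeAlgebra.lift_ι_apply,
    genToGroupAlgebra, mul_zero, zero_mul, smul_zero]
  case b_inv_r => rw [← map_mul, mul_inv_cancel, map_one]
  case b_inv_l => rw [← map_mul, inv_mul_cancel, map_one]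
  case b_braid i j h =>
    simp only [← map_mul, LabelledBraidGroup.crossing_braid h.symm]
  case bb_comm i j h => exact (LabelledBraidGroup.crossing_commute h).map _
  case tt_comm g g' j l h => exact (LabelledBraidGroup.label_commute h g g').map _
  case bt_comm g i l h =>
    have hslide := LabelledBraidGroup.semiconjBy_crossing_label i g l
    rw [braidGen_of_ne h] at hslide
    exact hslide.map _
  case bt_slide g i j j' h h' =>
    have hslide := LabelledBraidGroup.semiconjBy_crossing_label i g j
    rw [braidGen_left h h'] at hslide
    exact hslide.map _
  case bt_slide' g i j j' h h' =>
    have hslide := LabelledBraidGroup.semiconjBy_crossing_label i g j'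
    rw [braidGen_right h h'] at hslide
    exact hslide.map _

variable (k G n ε) in
/-- The algebra map `GBR_n(ε) → k[G^n ⋊ B_n]` sending every diagram with a deleted strand to
zero. -/
def toGroupAlgebra : GBRAlg k G n ε →ₐ[k] MonoidAlgebra k (LabelledBraidGroup G n) :=
  RingQuot.liftAlgHom k
    ⟨FreeAlgebra.lift k (genToGroupAlgebra k), fun _ _ => lift_genToGroupAlgebra_eq_of_rel⟩

theorem toGroupAlgebra_gen (x : GBRGen n G) :
    toGroupAlgebra k G n ε (gen k ε x) = genToGroupAlgebra k x :=
  (RingQuot.liftAlgHom_mkAlgHom_apply ..).trans (FreeAlgebra.lift_ι_apply ..)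

theorem groupAug_comp_toGroupAlgebra :
    (groupAug k _).comp (toGroupAlgebra k G n ε) = GBRaug k G n ε := by
  refine AlgHom.ext_of_adjoin_eq_top adjoin_range_gen ?_
  rintro _ ⟨x, rfl⟩
  rw [AlgHom.comp_apply, toGroupAlgebra_gen, GBRaug_gen]
  cases x <;> simp only [genToGroupAlgebra, groupAug, MonoidAlgebra.lift_of, map_zero,
    MonoidHom.one_apply]

end ToGroupAlgebra

section OfGroupAlgebra

variable (k G n ε) in
/-- The representation of `G^n ⋊ B_n` by diagrams without deleted strands. -/
def labelledBraidHom : LabelledBraidGroup G n →* (GBRAlg k G n ε)ˣ :=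
  LabelledBraidGroup.lift (crossing k G ε) (label k ε) (fun _ _ => crossing_braid)
    (fun _ _ => crossing_commute) (fun _ _ => label_commute) semiconjBy_crossing_label

variable (k G n ε) in
/-- The inclusion `k[G^n ⋊ B_n] → GBR_n(ε)` of the diagrams without deleted strands. -/
def ofGroupAlgebra : MonoidAlgebra k (LabelledBraidGroup G n) →ₐ[k] GBRAlg k G n ε :=
  MonoidAlgebra.lift k _ _ ((Units.coeHom _).comp (labelledBraidHom k G n ε))

theorem ofGroupAlgebra_of (γ : LabelledBraidGroup G n) :
    ofGroupAlgebra k G n ε (.of k _ γ) = labelledBraidHom k G n ε γ :=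
  MonoidAlgebra.lift_of _ _

theorem labelledBraidHom_crossing (i : Fin (n - 1)) :
    labelledBraidHom k G n ε (LabelledBraidGroup.crossing G i) = crossing k G ε i :=
  LabelledBraidGroup.lift_crossing ..

theorem labelledBraidHom_label (j : Fin n) (g : G) :
    labelledBraidHom k G n ε (LabelledBraidGroup.label j g) = label k ε j g :=
  LabelledBraidGroup.lift_label ..

theorem toGroupAlgebra_comp_ofGroupAlgebra :
    (toGroupAlgebra k G n ε).comp (ofGroupAlgebra k G n ε) = AlgHom.id k _ := by
  have hunits : (Units.map (toGroupAlgebra k G n ε : GBRAlg k G n ε →* _)).comp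
      (labelledBraidHom k G n ε) = (MonoidAlgebra.of k _).toHomUnits :=
    LabelledBraidGroup.hom_ext
      (fun i => Units.ext <|
        (congrArg _ (congrArg _ (labelledBraidHom_crossing i))).trans (toGroupAlgebra_gen (.b i)))
      (fun j g => Units.ext <|
        (congrArg _ (congrArg _ (labelledBraidHom_label j g))).trans (toGroupAlgebra_gen (.t g j)))
  refine MonoidAlgebra.algHom_ext (fun γ => ?_) (Subsingleton.elim _ _)
  have hγ := congrArg Units.val (DFunLike.congr_fun hunits γ)
  exact (congrArg _ (ofGroupAlgebra_of γ)).trans hγ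

theorem GBRaug_comp_ofGroupAlgebra :
    (GBRaug k G n ε).comp (ofGroupAlgebra k G n ε) = groupAug k _ := by
  rw [← groupAug_comp_toGroupAlgebra, AlgHom.comp_assoc, toGroupAlgebra_comp_ofGroupAlgebra,
    AlgHom.comp_id]

end OfGroupAlgebra

section DeletionComplement

theorem pairwise_commute_one_sub_smul_deletion (c : k) (s : Set (Fin n)) :
    s.Pairwise (Function.onFun Commute fun j => 1 - c • deletion k G ε j) :=
  fun j _ l _ _ => ((Commute.one_left _).sub_left <|
    (Commute.one_right _).sub_right ((deletion_commute j l).smul_left c |>.smul_right c))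

variable (G n ε) in
/-- The product `∏ j, (1 - c p_j)` over all strands. For `c = ε⁻¹` this is the idempotent
complementary to the ideal spanned by the diagrams with a deleted strand. -/
def deletionComplement (c : k) : GBRAlg k G n ε :=
  Finset.univ.noncommProd (fun j => 1 - c • deletion k G ε j)
    (pairwise_commute_one_sub_smul_deletion c _)

theorem GBRaug_deletionComplement (c : k) :
    GBRaug k G n ε (deletionComplement G n ε c) = 1 := by
  have hfactor (j : Fin n) : GBRaug k G n ε (1 - c • deletion k G ε j) = 1 := by
    rw [map_sub, map_smul, map_one, deletion, GBRaug_gen, smul_zero, sub_zero]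
  calc
    GBRaug k G n ε (deletionComplement G n ε c) = _ := Finset.map_noncommProd _ _ _ _
    _ = 1 ^ (Finset.univ : Finset (Fin n)).card :=
      Finset.noncommProd_eq_pow_card _ _ _ 1 fun j _ => hfactor j
    _ = 1 := one_pow _

theorem deletionComplement_mul_deletion {c : k} (hc : c * ε = 1) (j : Fin n) :
    deletionComplement G n ε c * deletion k G ε j = 0 := by
  have hj : (1 - c • deletion k G ε j) * deletion k G ε j = 0 := by
    rw [sub_mul, one_mul, smul_mul_assoc, deletion_mul_self, smul_smul, hc, one_smul, sub_self]
  rw [deletionComplement, ← Finset.noncommProd_erase_mul _ (Finset.mem_univ j), mul_assoc, hj,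
    mul_zero]

theorem commute_deletionComplement_of_perm {x : GBRAlg k G n ε} (σ : Equiv.Perm (Fin n))
    (h : ∀ j, SemiconjBy x (deletion k G ε j) (deletion k G ε (σ j))) (c : k) :
    Commute (deletionComplement G n ε c) x :=
  (commute_noncommProd_univ_of_perm _ σ fun j =>
    (SemiconjBy.one_right x).sub_right ((h j).smul_right c)).symm

theorem deletionComplement_commute_crossing (c : k) (i : Fin (n - 1)) :
    Commute (deletionComplement G n ε c) (crossing k G ε i) :=
  commute_deletionComplement_of_perm _ (semiconjBy_crossing_deletion i) c

theorem deletionComplement_commute_label (c : k) (j : Fin n) (g : G) :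
    Commute (deletionComplement G n ε c) (label k ε j g) :=
  commute_deletionComplement_of_perm 1 (fun l => commute_label_deletion j l g) c

theorem semiconjBy_deletionComplement {c : k} (hc : c * ε = 1) (a : GBRAlg k G n ε) :
    SemiconjBy (deletionComplement G n ε c) a
      (ofGroupAlgebra k G n ε (toGroupAlgebra k G n ε a)) := by
  refine semiconjBy_of_adjoin_eq_top (f := AlgHom.id k _)
    (g := (ofGroupAlgebra k G n ε).comp (toGroupAlgebra k G n ε)) adjoin_range_gen ?_ a
  rintro _ ⟨x, rfl⟩
  rw [AlgHom.comp_apply, toGroupAlgebra_gen, AlgHom.id_apply]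
  cases x with
  | b i =>
    rw [genToGroupAlgebra, ofGroupAlgebra_of, labelledBraidHom_crossing]
    exact deletionComplement_commute_crossing c i
  | bi i =>
    rw [genToGroupAlgebra, ofGroupAlgebra_of, map_inv, labelledBraidHom_crossing]
    exact (deletionComplement_commute_crossing c i).units_inv_right
  | p j =>
    rw [genToGroupAlgebra, map_zero, SemiconjBy, zero_mul]
    exact deletionComplement_mul_deletion hc j
  | t g j =>
    rw [genToGroupAlgebra, ofGroupAlgebra_of, labelledBraidHom_label]
    exact deletionComplement_commute_label c j g

end DeletionComplement

end GBRAlg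

end BraidedRookAlgebra

/-- **Homology of `G`-equivariant braided rook algebras** (invertible parameter).
Let `G` be a group, `k` a commutative `G`-ring, `n` a natural number, and `ε ∈ k`
invertible.  Then there is an isomorphism of graded `k`-modules
`Tor_*^{GBR_n(ε)}(𝟙,𝟙) ≅ Tor_*^{k[G^n ⋊ B_n]}(k,k) = H_*(G^n ⋊ B_n; k)`,
where the braid group `B_n` acts on `G^n` by permuting the factors via `B_n → Σ_n`. -/
theorem equivariant_braided_rook_homology (k G : Type) [CommRing k] [Group G]
    (ρ : G →* RingAut k) (n : ℕ) (ε : k) (hε : IsUnit ε) (q : ℕ) :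
    Nonempty ((barTor k (GBRAlg k G n ε) (GBRaug k G n ε) q) ≃ₗ[k]
      (groupTor k ((Fin n → G) ⋊[(permMulAut G n).comp (braidToPerm n)] BraidGroup n) q)) := by
  obtain ⟨c, hc⟩ := hε.exists_left_inv
  have hsection (b) : GBRAlg.toGroupAlgebra k G n ε (GBRAlg.ofGroupAlgebra k G n ε b) = b :=
    DFunLike.congr_fun GBRAlg.toGroupAlgebra_comp_ofGroupAlgebra b
  exact ⟨barTorEquiv (GBRAlg.toGroupAlgebra k G n ε) (GBRAlg.ofGroupAlgebra k G n ε)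
    GBRAlg.groupAug_comp_toGroupAlgebra GBRAlg.GBRaug_comp_ofGroupAlgebra
    (GBRAlg.semiconjBy_deletionComplement hc) (GBRAlg.GBRaug_deletionComplement c)
    (fun b => (hsection b).symm ▸ SemiconjBy.one_left b) (map_one _) q⟩

end
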